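/- Let m and F be positive integers with F > 2m and m not dividing F, and let S ∈ 𝓡(F,m). Then the 𝓡(F,m)-rank of S equals m − 2 if and only if one of the following holds: (1) e(S) = m − 1 and every element of msg(S) is at most F; (2) e(S) = m and exactly one element of msg(S) is greater than F. -/

import Mathlib

/-!
Write `G` for the set of minimal generators of `S` that are at most `F` and different from `m`.
The `𝓡(F,m)`-rank of `S` is `#G` (`Rrank_eq`):

* a member of the family containing `G` contains `0`, `m`, all integers above `F`, hence all minimal
  generators of `S`, hence `S`; so `G` generates `S` in the family;
* if `x ∈ G`, then `S \ {x}` is again in the family, so every set generating `S` contains `x`.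

Distinct minimal generators are incongruent modulo `m` (`msg_mod_injOn`), so `e(S) ≤ m`. Splitting the
minimal generators into `m`, `G` and the set `H` of those above `F` gives `e(S) = 1 + #G + #H ≤ m`;
with `#G = m - 2` this leaves only `#H = 0`, `e(S) = m - 1` and `#H = 1`, `e(S) = m`.
-/

/-- A numerical semigroup: a submonoid of (ℕ,+) with finite complement. -/
def IsNumericalSemigroup (S : Set ℕ) : Prop :=
  0 ∈ S ∧ (∀ a ∈ S, ∀ b ∈ S, a + b ∈ S) ∧ Sᶜ.Finite

/-- The multiplicity m(S): least positive element of S. -/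
noncomputable def mult (S : Set ℕ) : ℕ := sInf {s | s ∈ S ∧ s ≠ 0}

/-- The ratio r(S): least s ∈ S not divisible by the multiplicity. -/
noncomputable def ratio (S : Set ℕ) : ℕ := sInf {s | s ∈ S ∧ ¬ mult S ∣ s}

/-- The Frobenius number F(S): largest integer not in S. -/
noncomputable def frob (S : Set ℕ) : ℕ := sSup Sᶜ

/-- The genus g(S): number of gaps of S. -/
noncomputable def genus (S : Set ℕ) : ℕ := Sᶜ.ncard

/-- Pseudo-Frobenius numbers of S. -/
def PF (S : Set ℕ) : Set ℕ := {x | x ∉ S ∧ ∀ s ∈ S, s ≠ 0 → x + s ∈ S}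

/-- Special gaps of S. -/
def SG (S : Set ℕ) : Set ℕ := {x | x ∈ PF S ∧ 2 * x ∈ S}

/-- The Apéry set of n in S: elements s of S with s - n ∉ S (as integers). -/
def Ap (S : Set ℕ) (n : ℕ) : Set ℕ := {s | s ∈ S ∧ ¬ ∃ t ∈ S, t + n = s}

/-- The minimal system of generators of a numerical semigroup:
    nonzero elements not expressible as a sum of two nonzero elements. -/
def msg (S : Set ℕ) : Set ℕ :=
  {x | x ∈ S ∧ x ≠ 0 ∧ ∀ a ∈ S, ∀ b ∈ S, a ≠ 0 → b ≠ 0 → x ≠ a + b}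

/-- The embedding dimension e(S). -/
noncomputable def edim (S : Set ℕ) : ℕ := (msg S).ncard

/-- The submonoid of ℕ generated by a set A. -/
def closureSet (A : Set ℕ) : Set ℕ := (AddSubmonoid.closure A : Set ℕ)

/-- M is the minimum of the family R with respect to inclusion. -/
def IsMinOf (R : Set (Set ℕ)) (M : Set ℕ) : Prop := M ∈ R ∧ ∀ S ∈ R, M ⊆ S

/-- A ratio-covariety. -/
def IsRatioCovariety (R : Set (Set ℕ)) : Prop :=
  R.Nonempty ∧ (∀ S ∈ R, IsNumericalSemigroup S) ∧
  (∃ M, IsMinOf R M) ∧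
  (∀ S ∈ R, ∀ T ∈ R, S ∩ T ∈ R) ∧
  (∀ S ∈ R, ∀ M, IsMinOf R M → S ≠ M → S \ {ratio S} ∈ R)

/-- The family 𝓡(F,m) of numerical semigroups with Frobenius number F and multiplicity m. -/
def RFm (F m : ℕ) : Set (Set ℕ) :=
  {S | IsNumericalSemigroup S ∧ frob S = F ∧ mult S = m}

/-- Δ(F,m) = ⟨m⟩ ∪ {F+1, →}. -/
def Delta (F m : ℕ) : Set ℕ := {n | m ∣ n} ∪ {n | F < n}

/-- X is an 𝓡-set: disjoint from min(𝓡) and contained in some element of 𝓡. -/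
def IsRSet (R : Set (Set ℕ)) (X : Set ℕ) : Prop :=
  (∀ M, IsMinOf R M → X ∩ M = ∅) ∧ ∃ S ∈ R, X ⊆ S

/-- 𝓡[X]: the intersection of all elements of 𝓡 containing X. -/
def RGen (R : Set (Set ℕ)) (X : Set ℕ) : Set ℕ := ⋂₀ {S | S ∈ R ∧ X ⊆ S}

/-- The 𝓡-rank of S. -/
noncomputable def Rrank (R : Set (Set ℕ)) (S : Set ℕ) : ℕ :=
  sInf {n | ∃ X, IsRSet R X ∧ RGen R X = S ∧ X.ncard = n}
/-- The elements of the family described without `sSup` and `sInf` (for `0 < m`, `0 < F`). -/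
lemma mem_RFm_iff {F m : ℕ} (hm : 0 < m) (hF : 0 < F) (S : Set ℕ) :
    S ∈ RFm F m ↔ 0 ∈ S ∧ (∀ a ∈ S, ∀ b ∈ S, a + b ∈ S) ∧ F ∉ S ∧ (∀ n, F < n → n ∈ S) ∧
      m ∈ S ∧ ∀ s ∈ S, s ≠ 0 → m ≤ s := by
  constructor
  · rintro ⟨⟨h0, hadd, hfin⟩, hf, hmu⟩
    have hbdd : BddAbove Sᶜ := hfin.bddAbove
    have hne : (Sᶜ).Nonempty := by
      by_contra h
      rw [Set.not_nonempty_iff_eq_empty] at h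
      simp [frob, h] at hf
      omega
    have h1 : F ∈ Sᶜ := hf ▸ Nat.sSup_mem hne hbdd
    have hne2 : {s | s ∈ S ∧ s ≠ 0}.Nonempty := by
      by_contra h
      rw [Set.not_nonempty_iff_eq_empty] at h
      simp only [mult, h, Nat.sInf_empty] at hmu
      omega
    have h2 : m ∈ {s | s ∈ S ∧ s ≠ 0} := hmu ▸ Nat.sInf_mem hne2
    refine ⟨h0, hadd, h1, fun n hn => ?_, h2.1, fun s hs hs0 => ?_⟩
    · by_contra hnS
      have : n ≤ F := hf ▸ le_csSup hbdd hnS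
      omega
    · exact hmu ▸ Nat.sInf_le ⟨hs, hs0⟩
  · rintro ⟨h0, hadd, hFS, hgt, hmS, hle⟩
    have hub : ∀ n ∈ Sᶜ, n ≤ F := fun n hn => by
      by_contra h
      exact hn (hgt n (by omega))
    refine ⟨⟨h0, hadd, (Set.finite_Iic F).subset hub⟩, ?_, ?_⟩
    · exact IsGreatest.csSup_eq ⟨hFS, hub⟩
    · exact IsLeast.csInf_eq ⟨⟨hmS, by omega⟩, fun s hs => hle s hs.1 hs.2⟩

lemma Delta_subset {F m : ℕ} (hm : 0 < m) (hF : 0 < F) {S : Set ℕ} (hS : S ∈ RFm F m) :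
    Delta F m ⊆ S := by
  obtain ⟨h0, hadd, -, hgt, hmS, -⟩ := (mem_RFm_iff hm hF S).1 hS
  rintro n (⟨k, rfl⟩ | hn)
  · induction k with
    | zero => simpa using h0
    | succ k ih => rw [Nat.mul_succ]; exact hadd _ ih _ hmS
  · exact hgt n hn

lemma Delta_isMinOf {F m : ℕ} (hm : 0 < m) (hF : m < F) (hdvd : ¬ m ∣ F) :
    IsMinOf (RFm F m) (Delta F m) := by
  refine ⟨(mem_RFm_iff hm (by omega) _).2 ⟨Or.inl (dvd_zero m), ?_, ?_, fun n hn => Or.inr hn,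
    Or.inl dvd_rfl, ?_⟩, fun S hS => Delta_subset hm (by omega) hS⟩
  · rintro a (ha | ha) b (hb | hb)
    · exact Or.inl (dvd_add ha hb)
    all_goals
      right
      simp only [Set.mem_ofPred_eq] at *
      omega
  · rintro (h | h)
    · exact hdvd h
    · simp at h
  · rintro s (h | h) hs0
    · exact Nat.le_of_dvd (by omega) h
    · exact le_of_lt (lt_trans hF h)

/-- The minimal generators of `S` that are at most `F`, other than the multiplicity `m`. -/
def smallGens (F m : ℕ) (S : Set ℕ) : Set ℕ := {x | x ∈ msg S ∧ x ≤ F ∧ x ≠ m}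

/-- A minimal generator is not a smaller element of `S` plus a positive multiple of `m`. -/
lemma msg_ne_add_mul {F m : ℕ} (hm : 0 < m) (hF : 0 < F) {S : Set ℕ} (hS : S ∈ RFm F m)
    {x y k : ℕ} (hy : y ∈ msg S) (hx : x ∈ S) (hx0 : x ≠ 0) (hk : k ≠ 0) : y ≠ x + m * k :=
  hy.2.2 x hx _ (Delta_subset hm hF hS (Or.inl ⟨k, rfl⟩)) hx0 (Nat.mul_ne_zero (by omega) hk)

/-- Removing an element of `smallGens` stays inside the family. -/
lemma diff_mem_RFm {F m : ℕ} (hm : 0 < m) (hF : 0 < F) {S : Set ℕ} (hS : S ∈ RFm F m)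
    {x : ℕ} (hx : x ∈ smallGens F m S) : S \ {x} ∈ RFm F m := by
  obtain ⟨h0, hadd, hFS, hgt, hmS, hle⟩ := (mem_RFm_iff hm hF S).1 hS
  obtain ⟨⟨hxS, hx0, hirr⟩, hxF, hxm⟩ := hx
  refine (mem_RFm_iff hm hF _).2 ⟨⟨h0, fun h => hx0 h.symm⟩, ?_, fun h => hFS h.1,
    fun n hn => ⟨hgt n hn, ?_⟩, ⟨hmS, fun h => hxm h.symm⟩, fun s hs => hle s hs.1⟩
  · rintro a ⟨ha, hax⟩ b ⟨hb, hbx⟩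
    refine ⟨hadd a ha b hb, fun h => ?_⟩
    simp only [Set.mem_singleton_iff] at hax hbx h
    exact hirr a ha b hb (by omega) (by omega) h.symm
  · rw [Set.mem_singleton_iff]
    omega

/-- The elements of `smallGens` are indispensable in every generating `𝓡`-set. -/
lemma smallGens_subset {F m : ℕ} (hm : 0 < m) (hF : 0 < F) {S : Set ℕ} (hS : S ∈ RFm F m)
    {X : Set ℕ} (hX : RGen (RFm F m) X = S) : smallGens F m S ⊆ X := by
  intro x hx
  by_contra hxX
  have hXS : X ⊆ S := hX ▸ Set.subset_sInter fun T hT => hT.2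
  have h : S ⊆ S \ {x} := by
    conv_lhs => rw [← hX]
    exact Set.sInter_subset_of_mem ⟨diff_mem_RFm hm hF hS hx,
      fun y hy => ⟨hXS hy, fun h => hxX (h ▸ hy)⟩⟩
  exact (h hx.1.1).2 rfl

lemma RGen_smallGens {F m : ℕ} (hm : 0 < m) (hF : 0 < F) {S : Set ℕ} (hS : S ∈ RFm F m) :
    RGen (RFm F m) (smallGens F m S) = S := by
  refine subset_antisymm (Set.sInter_subset_of_mem ⟨hS, fun x hx => hx.1.1⟩)
    (Set.subset_sInter ?_)
  rintro T ⟨hT, hGT⟩ s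
  obtain ⟨h0, hadd, -, hgt, hmT, -⟩ := (mem_RFm_iff hm hF T).1 hT
  induction s using Nat.strong_induction_on with
  | _ s ih =>
    intro hs
    by_cases hs0 : s = 0
    · exact hs0 ▸ h0
    by_cases hsg : s ∈ msg S
    · by_cases hsF : F < s
      · exact hgt s hsF
      by_cases hsm : s = m
      · exact hsm ▸ hmT
      exact hGT ⟨hsg, by omega, hsm⟩
    · have : ∃ a ∈ S, ∃ b ∈ S, a ≠ 0 ∧ b ≠ 0 ∧ s = a + b := by
        by_contra h
        push Not at h
        exact hsg ⟨hs, hs0, h⟩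
      obtain ⟨a, ha, b, hb, ha0, hb0, rfl⟩ := this
      exact hadd a (ih a (by omega) ha) b (ih b (by omega) hb)

lemma smallGens_isRSet {F m : ℕ} (hm : 0 < m) (hF : m < F) (hdvd : ¬ m ∣ F) {S : Set ℕ}
    (hS : S ∈ RFm F m) : IsRSet (RFm F m) (smallGens F m S) := by
  refine ⟨fun M hM => ?_, S, hS, fun x hx => hx.1.1⟩
  rw [Set.eq_empty_iff_forall_notMem]
  rintro x ⟨⟨hx, hxF, hxm⟩, hxM⟩
  rcases hM.2 _ (Delta_isMinOf hm hF hdvd).1 hxM with ⟨k, hk⟩ | h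
  · have hmS : m ∈ S := Delta_subset hm (by omega) hS (Or.inl dvd_rfl)
    rcases k with _ | _ | k
    · exact hx.2.1 (by simpa using hk)
    · exact hxm (by simpa using hk)
    · exact msg_ne_add_mul hm (by omega) hS hx hmS (by omega) (Nat.succ_ne_zero k)
        (by rw [hk, Nat.succ_eq_add_one]; ring)
  · exact absurd hxF (not_le.2 h)

lemma Rrank_eq {F m : ℕ} (hm : 0 < m) (hF : m < F) (hdvd : ¬ m ∣ F) {S : Set ℕ}
    (hS : S ∈ RFm F m) : Rrank (RFm F m) S = (smallGens F m S).ncard := by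
  refine IsLeast.csInf_eq ⟨⟨_, smallGens_isRSet hm hF hdvd hS,
    RGen_smallGens hm (by omega) hS, rfl⟩, ?_⟩
  rintro n ⟨X, hX, hgen, rfl⟩
  -- `X` is finite since it avoids the minimum, so its `ncard` is not the junk value `0`.
  have hfin : X.Finite := (Set.finite_Iic F).subset fun x hx => by
    by_contra h
    have : x ∈ X ∩ Delta F m := ⟨hx, Or.inr (show F < x from not_le.1 h)⟩
    rw [hX.1 _ (Delta_isMinOf hm hF hdvd)] at this
    exact this
  exact Set.ncard_le_ncard (smallGens_subset hm (by omega) hS hgen) hfin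

lemma msg_mod_injOn {F m : ℕ} (hm : 0 < m) (hF : 0 < F) {S : Set ℕ} (hS : S ∈ RFm F m) :
    Set.InjOn (· % m) (msg S) := by
  have key : ∀ x ∈ msg S, ∀ y ∈ msg S, x % m = y % m → ¬ x < y := by
    intro x hx y hy h hlt
    obtain ⟨k, hk⟩ := (Nat.modEq_iff_dvd' hlt.le).1 h
    refine msg_ne_add_mul hm hF hS hy hx.1 hx.2.1 (k := k) ?_ (by omega)
    rintro rfl
    simp at hk
    omega
  intro x hx y hy h
  have h1 := key x hx y hy h
  have h2 := key y hy x hx h.symm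
  omega

lemma msg_finite {F m : ℕ} (hm : 0 < m) (hF : 0 < F) {S : Set ℕ} (hS : S ∈ RFm F m) :
    (msg S).Finite :=
  Set.Finite.of_injOn (t := Set.Iio m) (fun x _ => Nat.mod_lt x hm) (msg_mod_injOn hm hF hS)
    (Set.finite_Iio m)

lemma edim_le {F m : ℕ} (hm : 0 < m) (hF : 0 < F) {S : Set ℕ} (hS : S ∈ RFm F m) :
    edim S ≤ m := by
  have h := Set.ncard_le_ncard_of_injOn (t := Set.Iio m) (· % m)
    (fun x _ => Nat.mod_lt x hm) (msg_mod_injOn hm hF hS) (Set.finite_Iio m)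
  simpa [edim, Set.ncard_eq_toFinset_card'] using h

lemma mult_mem_msg {F m : ℕ} (hm : 0 < m) (hF : 0 < F) {S : Set ℕ} (hS : S ∈ RFm F m) :
    m ∈ msg S := by
  obtain ⟨-, -, -, -, hmS, hle⟩ := (mem_RFm_iff hm hF S).1 hS
  refine ⟨hmS, by omega, fun a ha b hb ha0 hb0 => ?_⟩
  have := hle a ha ha0
  omega

lemma edim_eq {F m : ℕ} (hm : 0 < m) (hF : m < F) {S : Set ℕ} (hS : S ∈ RFm F m) :
    edim S = 1 + (smallGens F m S).ncard + {x | x ∈ msg S ∧ F < x}.ncard := by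
  have hfin := msg_finite hm (by omega) hS
  have hG : (smallGens F m S).Finite := hfin.subset fun x hx => hx.1
  have hH : {x | x ∈ msg S ∧ F < x}.Finite := hfin.subset fun x hx => hx.1
  have hmm := mult_mem_msg hm (by omega) hS
  have heq : msg S = insert m (smallGens F m S) ∪ {x | x ∈ msg S ∧ F < x} := by
    ext x
    simp only [smallGens, Set.mem_union, Set.mem_insert_iff, Set.mem_ofPred_eq]
    constructor
    · intro hx
      by_cases h1 : x = m
      · exact Or.inl (Or.inl h1)
      by_cases h2 : F < x
      · exact Or.inr ⟨hx, h2⟩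
      · exact Or.inl (Or.inr ⟨hx, by omega, h1⟩)
    · rintro ((rfl | h) | h)
      exacts [hmm, h.1, h.1]
  have hdis : Disjoint (insert m (smallGens F m S)) {x | x ∈ msg S ∧ F < x} := by
    rw [Set.disjoint_left]
    rintro x (rfl | hx) hx'
    · exact lt_asymm hF hx'.2
    · exact absurd hx.2.1 (not_le.2 hx'.2)
  conv_lhs => rw [edim, heq]
  rw [Set.ncard_union_eq hdis (hG.insert m) hH,
    Set.ncard_insert_of_notMem (fun h => h.2.2 rfl) hG]
  omega

theorem MR_semigroup_characterization (m F : ℕ) (hm : 0 < m) (hF : 2 * m < F)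
    (hdvd : ¬ m ∣ F) (S : Set ℕ) (hS : S ∈ RFm F m) :
    Rrank (RFm F m) S = m - 2 ↔
      (edim S = m - 1 ∧ ∀ x ∈ msg S, x ≤ F) ∨
      (edim S = m ∧ ∃! x, x ∈ msg S ∧ F < x) := by
  have hm1 : m ≠ 1 := fun h => hdvd (h ▸ one_dvd F)
  have hle := edim_le hm (by omega) hS
  have hsum := edim_eq hm (by omega) hS
  have hfin : {x | x ∈ msg S ∧ F < x}.Finite :=
    (msg_finite hm (by omega) hS).subset fun x hx => hx.1
  have h0 : (∀ x ∈ msg S, x ≤ F) ↔ {x | x ∈ msg S ∧ F < x}.ncard = 0 := by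
    rw [Set.ncard_eq_zero hfin, Set.eq_empty_iff_forall_notMem]
    simp
  have h1 : (∃! x, x ∈ msg S ∧ F < x) ↔ {x | x ∈ msg S ∧ F < x}.ncard = 1 := by
    rw [Set.ncard_eq_one]
    simp only [Set.eq_singleton_iff_unique_mem]
    rfl
  rw [Rrank_eq hm (by omega) hdvd hS, h0, h1]
  omega
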